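/- Let L be the splitting field of the polynomial X³ − 3X + 1 over ℚ (inside a fixed algebraic closure of ℚ). Then there is no element x ∈ L whose field norm N_{L/ℚ}(x) equals 2. -/

import Mathlib

open Polynomial

/-- The norm form of `ℤ[a]`, where `a ^ 3 = 3 * a - 1`, in the basis `1, a, a ^ 2`. -/
def cubicNormForm {R : Type*} [CommRing R] (p q r : R) : R :=
  !![p, -r, -q; q, p + 3 * r, 3 * q - r; r, q, p + 3 * r].det

theorem cubicNormForm_eq {R : Type*} [CommRing R] (p q r : R) :
    cubicNormForm p q r =
      p * ((p + 3 * r) ^ 2 - q * (3 * q - r)) + r * (q * (p + 3 * r) - r * (3 * q - r))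
        - q * (q ^ 2 - r * (p + 3 * r)) := by
  simp only [cubicNormForm, Matrix.det_fin_three, Matrix.of_apply, Matrix.cons_val]
  ring

theorem cubicNormForm_mul {R : Type*} [CommRing R] (d p q r : R) :
    cubicNormForm (d * p) (d * q) (d * r) = d ^ 3 * cubicNormForm p q r := by
  simp only [cubicNormForm_eq]
  ring

theorem cubicNormForm_intCast {R : Type*} [CommRing R] (p q r : ℤ) :
    ((cubicNormForm p q r : ℤ) : R) = cubicNormForm (p : R) (q : R) (r : R) := by
  simp only [cubicNormForm_eq]
  push_cast
  ring

theorem even_of_even_cubicNormForm {p q r : ℤ} (h : (2 : ℤ) ∣ cubicNormForm p q r) :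
    (2 : ℤ) ∣ p ∧ (2 : ℤ) ∣ q ∧ (2 : ℤ) ∣ r := by
  have key : ∀ p q r : ZMod 2,
      cubicNormForm p q r = 0 → p = 0 ∧ q = 0 ∧ r = 0 := by
    simp only [cubicNormForm_eq]
    decide
  have cast (n : ℤ) : ((n : ZMod 2) = 0) ↔ (2 : ℤ) ∣ n := ZMod.intCast_zmod_eq_zero_iff_dvd n 2
  rw [← cast, cubicNormForm_intCast] at h
  simpa only [cast] using key _ _ _ h

theorem eq_zero_of_cubicNormForm_eq_two_mul_cube (n : ℕ) :
    ∀ p q r d : ℤ, d.natAbs = n → cubicNormForm p q r = 2 * d ^ 3 → d = 0 := by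
  induction n using Nat.strong_induction_on with
  | _ n ih =>
    intro p q r d hd h
    obtain ⟨⟨p, rfl⟩, ⟨q, rfl⟩, ⟨r, rfl⟩⟩ :=
      even_of_even_cubicNormForm (Dvd.intro _ h.symm)
    rw [cubicNormForm_mul] at h
    have hd2 : (2 : ℤ) ∣ d :=
      Int.prime_two.dvd_of_dvd_pow (n := 3) ⟨2 * cubicNormForm p q r, by linarith⟩
    obtain ⟨d, rfl⟩ := hd2
    by_contra hne
    have hd0 : d ≠ 0 := by rintro rfl; simp at hne
    exact hd0 (ih d.natAbs (by omega) p q r d rfl (by linarith))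

theorem cubicNormForm_ne_two (p q r : ℚ) : cubicNormForm p q r ≠ 2 := by
  intro h
  set d : ℤ := p.den * q.den * r.den with hd
  have hd0 : d ≠ 0 := by simp [hd]
  refine hd0 (eq_zero_of_cubicNormForm_eq_two_mul_cube _ (p.num * q.den * r.den)
    (q.num * p.den * r.den) (r.num * p.den * q.den) d rfl ?_)
  have hp : ((p.num * q.den * r.den : ℤ) : ℚ) = d * p := by
    rw [hd]; push_cast; linear_combination (-q.den * r.den : ℚ) * p.mul_den_eq_num
  have hq : ((q.num * p.den * r.den : ℤ) : ℚ) = d * q := by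
    rw [hd]; push_cast; linear_combination (-p.den * r.den : ℚ) * q.mul_den_eq_num
  have hr : ((r.num * p.den * q.den : ℤ) : ℚ) = d * r := by
    rw [hd]; push_cast; linear_combination (-p.den * q.den : ℚ) * r.mul_den_eq_num
  have : ((cubicNormForm (p.num * q.den * r.den) (q.num * p.den * r.den)
      (r.num * p.den * q.den) : ℤ) : ℚ) = ((2 * d ^ 3 : ℤ) : ℚ) := by
    rw [cubicNormForm_intCast, hp, hq, hr, cubicNormForm_mul, h]
    push_cast
    ring
  exact_mod_cast this

theorem natDegree_X_pow_three_sub {R : Type*} [CommRing R] [Nontrivial R] :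
    (X ^ 3 - 3 * X + 1 : R[X]).natDegree = 3 := by
  rw [show (X ^ 3 - 3 * X + 1 : R[X]) = X ^ 3 - C 3 * X + C 1 by simp [map_ofNat C]]
  compute_degree!

theorem monic_X_pow_three_sub {R : Type*} [CommRing R] [Nontrivial R] :
    (X ^ 3 - 3 * X + 1 : R[X]).Monic := by
  rw [show (X ^ 3 - 3 * X + 1 : R[X]) = X ^ 3 - C 3 * X + C 1 by simp [map_ofNat C]]
  monicity!

theorem irreducible_X_pow_three_sub : Irreducible (X ^ 3 - 3 * X + 1 : ℚ[X]) := by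
  have hmap : (X ^ 3 - 3 * X + 1 : ℚ[X]) =
      (X ^ 3 - 3 * X + 1 : ℤ[X]).map (Int.castRingHom ℚ) := by simp
  rw [hmap]
  refine (Polynomial.Monic.irreducible_iff_irreducible_map_fraction_map (K := ℚ)
    monic_X_pow_three_sub).1 ?_
  refine Polynomial.Monic.irreducible_of_irreducible_map (Int.castRingHom (ZMod 2)) _
    monic_X_pow_three_sub ?_
  have hmap2 : (X ^ 3 - 3 * X + 1 : ℤ[X]).map (Int.castRingHom (ZMod 2)) =
      X ^ 3 - 3 * X + 1 := by simp
  rw [hmap2, Polynomial.irreducible_iff_roots_eq_zero_of_degree_le_three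
    (by rw [natDegree_X_pow_three_sub]; norm_num) (by rw [natDegree_X_pow_three_sub])]
  rw [Multiset.eq_zero_iff_forall_notMem]
  intro a ha
  have := isRoot_of_mem_roots ha
  simp only [IsRoot.def, eval_add, eval_sub, eval_pow, eval_X, eval_mul, eval_ofNat,
    eval_one] at this
  clear ha
  revert a
  decide

theorem norm_eq_cubicNormForm {A : Type*} [CommRing A] [Algebra ℚ A]
    (b : Module.Basis (Fin 3) ℚ A) (a : A) (ha : a ^ 3 = 3 * a - 1)
    (hb : ∀ i, b i = a ^ (i : ℕ)) (x : A) :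
    Algebra.norm ℚ x = cubicNormForm (b.repr x 0) (b.repr x 1) (b.repr x 2) := by
  set p := b.repr x 0 with hp
  set q := b.repr x 1 with hq
  set r := b.repr x 2 with hr
  have hx : x = p • b 0 + q • b 1 + r • b 2 := by
    rw [hp, hq, hr, ← Fin.sum_univ_three (fun i => b.repr x i • b i), b.sum_repr]
  have hcol (j : Fin 3) : x * b j =
      ∑ i, (!![p, -r, -q; q, p + 3 * r, 3 * q - r; r, q, p + 3 * r] i j) • b i := by
    rw [hx]
    fin_cases j <;>
    simp [Fin.sum_univ_three, hb, Algebra.smul_def, map_ofNat (algebraMap ℚ A)]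
    · linear_combination (algebraMap ℚ A r) * ha
    · linear_combination (algebraMap ℚ A q + algebraMap ℚ A r * a) * ha
  rw [Algebra.norm_eq_matrix_det b, cubicNormForm]
  congr 1
  ext i j
  rw [Algebra.leftMulMatrix_eq_repr_mul, hcol, b.repr_sum_self]

section SplittingField

variable {L : Type*} [Field L] [Algebra ℚ L] {a : L}

theorem map_X_pow_three_sub_eq_prod (ha : a ^ 3 = 3 * a - 1) :
    (X ^ 3 - 3 * X + 1 : ℚ[X]).map (algebraMap ℚ L) =
      (X - C a) * (X - C (a ^ 2 - 2)) * (X - C (2 - a - a ^ 2)) := by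
  have hC : (C a) ^ 3 = 3 * C a - 1 := by
    simpa [map_ofNat C] using congrArg C ha
  simp only [Polynomial.map_add, Polynomial.map_sub, Polynomial.map_mul, Polynomial.map_pow,
    Polynomial.map_one, Polynomial.map_ofNat, map_X, map_sub, map_pow, map_ofNat C]
  linear_combination ((C a + 1) * X + 1 - C a - C a ^ 2) * hC

theorem adjoin_root_X_pow_three_sub_eq_top
    (h : IsSplittingField ℚ L (X ^ 3 - 3 * X + 1 : ℚ[X])) (ha : a ^ 3 = 3 * a - 1) :
    Algebra.adjoin ℚ {a} = ⊤ := by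
  rw [eq_top_iff, ← h.adjoin_rootSet', Algebra.adjoin_le_iff]
  intro y hy
  have hy' : eval y ((X ^ 3 - 3 * X + 1 : ℚ[X]).map (algebraMap ℚ L)) = 0 := by
    rw [eval_map_algebraMap]
    exact aeval_eq_zero_of_mem_rootSet hy
  have hmem : a ∈ Algebra.adjoin ℚ {a} := Algebra.self_mem_adjoin_singleton ℚ a
  have htwo : (2 : L) ∈ Algebra.adjoin ℚ {a} := ofNat_mem _ 2
  simp only [map_X_pow_three_sub_eq_prod ha, eval_mul, eval_sub, eval_X, eval_C, mul_eq_zero,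
    sub_eq_zero] at hy'
  obtain (rfl | rfl) | rfl := hy'
  · exact hmem
  · exact sub_mem (pow_mem hmem 2) htwo
  · exact sub_mem (sub_mem htwo hmem) (pow_mem hmem 2)

theorem norm_ne_two_of_isSplittingField
    (h : IsSplittingField ℚ L (X ^ 3 - 3 * X + 1 : ℚ[X])) (x : L) :
    Algebra.norm ℚ x ≠ 2 := by
  obtain ⟨a, ha⟩ := h.splits'.exists_eval_eq_zero (by
    rw [degree_map]
    exact irreducible_X_pow_three_sub.degree_pos.ne')
  rw [eval_map_algebraMap] at ha
  have ha3 : a ^ 3 = 3 * a - 1 := by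
    simp only [map_add, map_sub, map_mul, map_pow, aeval_X, map_one, map_ofNat] at ha
    linear_combination ha
  have hmin : minpoly ℚ a = X ^ 3 - 3 * X + 1 :=
    (minpoly.eq_of_irreducible_of_monic irreducible_X_pow_three_sub ha monic_X_pow_three_sub).symm
  let pb := PowerBasis.ofAdjoinEqTop ⟨_, monic_X_pow_three_sub, ha⟩
    (adjoin_root_X_pow_three_sub_eq_top h ha3)
  have hdim : pb.dim = 3 := by
    rw [show pb.dim = (minpoly ℚ a).natDegree from rfl, hmin, natDegree_X_pow_three_sub]
  have hgen : pb.gen = a := rfl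
  rw [norm_eq_cubicNormForm (pb.basis.reindex (finCongr hdim)) a ha3 (fun i ↦ by simp [hgen])]
  exact cubicNormForm_ne_two _ _ _

end SplittingField

/-- no element of the splitting field `L` of `X³ - 3X + 1` over `ℚ`
has field norm `N_{L/ℚ}` equal to `2`. -/
theorem stmt13 :
    ∀ x : (X ^ 3 - 3 * X + 1 : ℚ[X]).SplittingField,
      Algebra.norm ℚ x ≠ 2 := by
  refine norm_ne_two_of_isSplittingField ?_
  convert IsSplittingField.splittingField (X ^ 3 - 3 * X + 1 : ℚ[X])
  exact Subsingleton.elim _ _
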